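/- arXiv:1106.4273 — 2 statements merged into one kernel-verified Lean document; each statement's English description precedes it below -/
import Mathlib

section
/- Suppose q_n ∈ ℕ and finite binary strings s_{n,i} (n ∈ ℕ, i ∈ {0,1}) and s_t (t ∈ 2^{<ω}) satisfy: (1) q_0 = 0 and, for every n, q_{n+1} equals the common length of s_t for t ∈ 2^n; (2) s_{0,0} = s_{0,1} = ∅ and, for n > 0, s_{n,0} and s_{n,1} have equal positive length; (3) s_∅ = ∅ and s_{t⌢i} = s_t ⌢ s_{lh(t)+1, i} for all t ∈ 2^{<ω} and i ∈ {0,1}; (4) for every n, 1/(n+1) ≤ Σ_{k < lh(s_{n+1,0})} |s_{n+1,0}(k) − s_{n+1,1}(k)|/(q_{n+1}+k+1) ≤ 2/(n+1). Define a : 2^ω → 2^ω by a_x = ⋃_{n∈ℕ} s_{x↾n}. Then a is continuous and, for all x, y ∈ 2^ω, Σ_{n=0}^∞ |x(n)−y(n)|/(n+1) ≤ Σ_{m=0}^∞ |a_x(m)−a_y(m)|/(m+1) ≤ 2 Σ_{n=0}^∞ |x(n)−y(n)|/(n+1); in particular x E_I y if and only if a_x E_I a_y. -/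
open scoped ENNReal

/-- The Cantor space `2^ω`. -/
abbrev Cantor : Type := ℕ → Bool

/-- The sum `Σ_n |x(n) - y(n)|/(n+1)` (computed in `[0,∞]`). -/
noncomputable def eiSum (x y : Cantor) : ℝ≥0∞ :=
  ∑' n : ℕ, if x n = y n then 0 else 1 / ((n : ℝ≥0∞) + 1)

/-- The summable-difference equivalence relation `E_I`. -/
def EI (x y : Cantor) : Prop := eiSum x y < ⊤

/-- The initial segment `x ↾ n` of `x ∈ 2^ω`, as a finite binary string. -/
def prefixOf (x : Cantor) (n : ℕ) : List Bool := (List.range n).map x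

/-- The map `x ↦ a_x = ⋃_n s_{x↾n}` determined by the assignment `t ↦ s_t`
(written `st`) of strings to strings.  (Under the hypotheses below the strings
`s_{x↾n}` form an increasing chain whose `m`-th entry is already determined by
`s_{x↾(m+1)}`, so this is the natural formal rendering of the union.) -/
def buildA (st : List Bool → List Bool) (x : Cantor) : Cantor :=
  fun m => (st (prefixOf x (m + 1))).getD m false

/-!
The string `s_{x↾(n+1)}` is `s_{x↾n}` followed by the block `s_{n+1,x(n)}`, so `a_x` is the
concatenation of these blocks, and the block at stage `n` occupies the same positions
`[q_{n+1}, q_{n+2})` for every `x`. Cutting the sum `Σ |a_x(m) - a_y(m)|/(m+1)` at these positions,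
the `n`-th piece vanishes when `x(n) = y(n)`, and otherwise it is the sum in condition (4), which is
comparable to `1/(n+1)`.
-/

theorem tsum_eq_sum_range_add_tsum_sum_Ico (f : ℕ → ℝ≥0∞) {p : ℕ → ℕ} (hmono : Monotone p)
    (htop : Filter.Tendsto p Filter.atTop Filter.atTop) :
    ∑' m, f m =
      ∑ m ∈ Finset.range (p 0), f m + ∑' n, ∑ m ∈ Finset.Ico (p n) (p (n + 1)), f m := by
  have partial_sums (N : ℕ) : ∑ m ∈ Finset.range (p N), f m = ∑ m ∈ Finset.range (p 0), f m +
      ∑ n ∈ Finset.range N, ∑ m ∈ Finset.Ico (p n) (p (n + 1)), f m := by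
    induction N with
    | zero => simp
    | succ N ih =>
      rw [Finset.sum_range_succ, ← add_assoc, ← ih,
        Finset.sum_range_add_sum_Ico _ (hmono N.le_succ)]
  refine tendsto_nhds_unique ((ENNReal.tendsto_nat_tsum f).comp htop) ?_
  exact ((ENNReal.tendsto_nat_tsum _).const_add _).congr fun N => (partial_sums N).symm

theorem length_prefixOf (x : Cantor) (n : ℕ) : (prefixOf x n).length = n := by
  simp [prefixOf]

theorem prefixOf_succ (x : Cantor) (n : ℕ) : prefixOf x (n + 1) = prefixOf x n ++ [x n] := by
  simp [prefixOf, List.range_succ]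

theorem isLocallyConstant_prefixOf (n : ℕ) :
    IsLocallyConstant fun x : Cantor => prefixOf x n := by
  induction n with
  | zero => exact IsLocallyConstant.const []
  | succ n ih =>
    have coord : IsLocallyConstant fun x : Cantor => x n :=
      (IsLocallyConstant.iff_continuous _).2 (continuous_apply n)
    simpa only [prefixOf_succ] using ih.comp₂ coord fun t i => t ++ [i]

theorem continuous_buildA (st : List Bool → List Bool) : Continuous (buildA st) :=
  continuous_pi fun m =>
    ((isLocallyConstant_prefixOf (m + 1)).comp fun t => (st t).getD m false).continuous

theorem ofReal_div_add_one (c : ℝ) (n : ℕ) :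
    ENNReal.ofReal (c / (n + 1)) = ENNReal.ofReal c * (1 / ((n : ℝ≥0∞) + 1)) := by
  rw [ENNReal.ofReal_div_of_pos (by positivity), ENNReal.ofReal_add (by positivity) one_pos.le,
    ENNReal.ofReal_natCast, ENNReal.ofReal_one, mul_one_div]

theorem ofReal_mul_eiSum (c : ℝ) (x y : Cantor) :
    ENNReal.ofReal c * eiSum x y =
      ∑' n : ℕ, if x n = y n then 0 else ENNReal.ofReal (c / (n + 1)) := by
  simp only [eiSum, ← ENNReal.tsum_mul_left, mul_ite, mul_zero, ofReal_div_add_one]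

/-- The contribution to `Σ |a(m) - b(m)|/(m+1)` of two blocks `u` and `v` of equal length that `a`
and `b` carry from position `p` on; the sum runs over the positions of `u`. It is real-valued, so
that condition (4) bounds it as it stands. -/
noncomputable def blockSum (p : ℕ) (u v : List Bool) : ℝ :=
  ∑ k ∈ Finset.range u.length,
    if u.getD k false = v.getD k false then 0 else 1 / ((p : ℝ) + k + 1)

theorem blockSum_self (p : ℕ) (u : List Bool) : blockSum p u u = 0 := by
  simp [blockSum]

theorem blockSum_comm (p : ℕ) {u v : List Bool} (h : u.length = v.length) :
    blockSum p u v = blockSum p v u := by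
  simp only [blockSum, h, eq_comm]

theorem length_pos_of_blockSum_pos {p : ℕ} {u v : List Bool} (h : 0 < blockSum p u v) :
    0 < u.length := by
  contrapose! h
  simp [blockSum, Nat.le_zero.1 h]

theorem ofReal_blockSum (p : ℕ) (u v : List Bool) :
    ENNReal.ofReal (blockSum p u v) = ∑ k ∈ Finset.range u.length,
      if u.getD k false = v.getD k false then 0 else 1 / (((p + k : ℕ) : ℝ≥0∞) + 1) := by
  have term (k : ℕ) :
      ENNReal.ofReal (1 / ((p : ℝ) + k + 1)) = 1 / (((p + k : ℕ) : ℝ≥0∞) + 1) := by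
    simpa using ofReal_div_add_one 1 (p + k)
  rw [blockSum, ENNReal.ofReal_sum_of_nonneg fun k _ => by positivity]
  simp only [apply_ite ENNReal.ofReal, ENNReal.ofReal_zero, term]

/-- The strings `st t` are built by appending the block `s n i` when a string of length `n` is
extended by `i`, with the block occupying the positions `[p n, p (n + 1))` whatever `t` and `i` are.
In terms of the paper's data, `p n` is `q_{n+1}` and `s n i` is `s_{n+1,i}`. -/
structure IsBlockScheme (p : ℕ → ℕ) (s : ℕ → Bool → List Bool) (st : List Bool → List Bool) :
    Prop where
  strictMono : StrictMono p
  length_eq (t : List Bool) : (st t).length = p t.length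
  append_singleton (t : List Bool) (i : Bool) : st (t ++ [i]) = st t ++ s t.length i

namespace IsBlockScheme

variable {p : ℕ → ℕ} {s : ℕ → Bool → List Bool} {st : List Bool → List Bool}

theorem apply_prefixOf_succ (h : IsBlockScheme p s st) (x : Cantor) (n : ℕ) :
    st (prefixOf x (n + 1)) = st (prefixOf x n) ++ s n (x n) := by
  rw [prefixOf_succ, h.append_singleton, length_prefixOf]

theorem length_apply_prefixOf (h : IsBlockScheme p s st) (x : Cantor) (n : ℕ) :
    (st (prefixOf x n)).length = p n := by
  rw [h.length_eq, length_prefixOf]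

theorem add_length_block (h : IsBlockScheme p s st) (n : ℕ) (i : Bool) :
    p n + (s n i).length = p (n + 1) := by
  simpa [h.length_apply_prefixOf] using
    (congrArg List.length (h.apply_prefixOf_succ (fun _ => i) n)).symm

theorem length_block_eq (h : IsBlockScheme p s st) (n : ℕ) (i j : Bool) :
    (s n i).length = (s n j).length :=
  Nat.add_left_cancel ((h.add_length_block n i).trans (h.add_length_block n j).symm)

theorem isPrefix_apply_prefixOf (h : IsBlockScheme p s st) (x : Cantor) {m n : ℕ} (hmn : m ≤ n) :
    st (prefixOf x m) <+: st (prefixOf x n) := by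
  induction n, hmn using Nat.le_induction with
  | base => exact List.prefix_rfl
  | succ n _ ih => exact ih.trans (h.apply_prefixOf_succ x n ▸ List.prefix_append _ _)

theorem buildA_eq_getD (h : IsBlockScheme p s st) (x : Cantor) {m n : ℕ} (hm : m < p n) :
    buildA st x m = (st (prefixOf x n)).getD m false := by
  have getD_eq {i j : ℕ} (hij : i ≤ j) (hi : m < p i) :
      (st (prefixOf x j)).getD m false = (st (prefixOf x i)).getD m false := by
    obtain ⟨r, hr⟩ := h.isPrefix_apply_prefixOf x hij
    rw [← hr, List.getD_append _ _ _ _ (by rwa [h.length_apply_prefixOf])]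
  rcases le_total n (m + 1) with hn | hn
  · exact getD_eq hn hm
  · exact (getD_eq hn (m.lt_succ_self.trans_le (h.strictMono.id_le _))).symm

theorem buildA_add (h : IsBlockScheme p s st) (x : Cantor) {n k : ℕ}
    (hk : k < (s n (x n)).length) :
    buildA st x (p n + k) = (s n (x n)).getD k false := by
  have hlt : p n + k < p (n + 1) := by have := h.add_length_block n (x n); lia
  rw [h.buildA_eq_getD x hlt, h.apply_prefixOf_succ, ← h.length_apply_prefixOf x n,
    List.getD_append_right _ _ _ _ (Nat.le_add_right _ _), Nat.add_sub_cancel_left]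

theorem eiSum_buildA_eq_tsum (h : IsBlockScheme p s st) (x y : Cantor) :
    eiSum (buildA st x) (buildA st y) =
      ∑' n, ENNReal.ofReal (blockSum (p n) (s n (x n)) (s n (y n))) := by
  have common_start {m : ℕ} (hm : m < p 0) : buildA st x m = buildA st y m :=
    (h.buildA_eq_getD x hm).trans (h.buildA_eq_getD y hm).symm
  rw [eiSum, tsum_eq_sum_range_add_tsum_sum_Ico _ h.strictMono.monotone h.strictMono.tendsto_atTop,
    Finset.sum_eq_zero fun m hm => if_pos (common_start (Finset.mem_range.1 hm)), zero_add]
  refine tsum_congr fun n => ?_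
  rw [Finset.sum_Ico_eq_sum_range, ofReal_blockSum, ← h.add_length_block n (x n),
    Nat.add_sub_cancel_left]
  refine Finset.sum_congr rfl fun k hk => ?_
  have hk := Finset.mem_range.1 hk
  rw [h.buildA_add x hk, h.buildA_add y (h.length_block_eq n _ _ ▸ hk)]

theorem ofReal_blockSum_eq_ite (h : IsBlockScheme p s st) (n : ℕ) (i j : Bool) :
    ENNReal.ofReal (blockSum (p n) (s n i) (s n j)) =
      if i = j then 0 else ENNReal.ofReal (blockSum (p n) (s n false) (s n true)) := by
  cases i <;> cases j <;> simp [blockSum_self, blockSum_comm _ (h.length_block_eq n true false)]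

theorem eiSum_buildA_eq_tsum_ite (h : IsBlockScheme p s st) (x y : Cantor) :
    eiSum (buildA st x) (buildA st y) = ∑' n,
      if x n = y n then 0 else ENNReal.ofReal (blockSum (p n) (s n false) (s n true)) :=
  (h.eiSum_buildA_eq_tsum x y).trans <| tsum_congr fun n => h.ofReal_blockSum_eq_ite n _ _

theorem ofReal_mul_eiSum_le_eiSum_buildA (h : IsBlockScheme p s st) {c : ℝ}
    (hc : ∀ n : ℕ, c / (n + 1) ≤ blockSum (p n) (s n false) (s n true)) (x y : Cantor) :
    ENNReal.ofReal c * eiSum x y ≤ eiSum (buildA st x) (buildA st y) := by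
  rw [ofReal_mul_eiSum, h.eiSum_buildA_eq_tsum_ite]
  refine ENNReal.tsum_le_tsum fun n => ?_
  split_ifs
  · exact le_rfl
  · exact ENNReal.ofReal_le_ofReal (hc n)

theorem eiSum_buildA_le_ofReal_mul_eiSum (h : IsBlockScheme p s st) {C : ℝ}
    (hC : ∀ n : ℕ, blockSum (p n) (s n false) (s n true) ≤ C / (n + 1)) (x y : Cantor) :
    eiSum (buildA st x) (buildA st y) ≤ ENNReal.ofReal C * eiSum x y := by
  rw [ofReal_mul_eiSum, h.eiSum_buildA_eq_tsum_ite]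
  refine ENNReal.tsum_le_tsum fun n => ?_
  split_ifs
  · exact le_rfl
  · exact ENNReal.ofReal_le_ofReal (hC n)

theorem of_blockSum_pos (hlen : ∀ t, (st t).length = p t.length)
    (happ : ∀ t i, st (t ++ [i]) = st t ++ s t.length i)
    (hpos : ∀ n, 0 < blockSum (p n) (s n false) (s n true)) : IsBlockScheme p s st where
  strictMono := strictMono_nat_of_lt_succ fun n => by
    have hsucc := congrArg List.length (happ (List.replicate n false) false)
    simp only [List.length_append, hlen, List.length_replicate, List.length_singleton] at hsucc
    have := length_pos_of_blockSum_pos (hpos n)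
    lia
  length_eq := hlen
  append_singleton := happ

end IsBlockScheme

theorem buildA_reduction_general
    (q : ℕ → ℕ) (s2 : ℕ → Bool → List Bool) (st : List Bool → List Bool) {c C : ℝ} (hc : 0 < c)
    (hlen : ∀ t : List Bool, (st t).length = q (t.length + 1))
    (happ : ∀ (t : List Bool) (i : Bool), st (t ++ [i]) = st t ++ s2 (t.length + 1) i)
    (hbound : ∀ n : ℕ,
      c / (n + 1) ≤ blockSum (q (n + 1)) (s2 (n + 1) false) (s2 (n + 1) true) ∧
      blockSum (q (n + 1)) (s2 (n + 1) false) (s2 (n + 1) true) ≤ C / (n + 1)) :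
    Continuous (buildA st) ∧
      ∀ x y : Cantor,
        ENNReal.ofReal c * eiSum x y ≤ eiSum (buildA st x) (buildA st y) ∧
        eiSum (buildA st x) (buildA st y) ≤ ENNReal.ofReal C * eiSum x y ∧
        (EI x y ↔ EI (buildA st x) (buildA st y)) := by
  have scheme : IsBlockScheme (fun n => q (n + 1)) (fun n => s2 (n + 1)) st :=
    .of_blockSum_pos hlen happ fun n => (by positivity : 0 < c / (n + 1)).trans_le (hbound n).1
  refine ⟨continuous_buildA st, fun x y => ?_⟩
  have lower := scheme.ofReal_mul_eiSum_le_eiSum_buildA (fun n => (hbound n).1) x y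
  have upper := scheme.eiSum_buildA_le_ofReal_mul_eiSum (fun n => (hbound n).2) x y
  refine ⟨lower, upper, fun hxy => upper.trans_lt (ENNReal.mul_lt_top ENNReal.ofReal_lt_top hxy),
    fun hab => ?_⟩
  exact ENNReal.lt_top_of_mul_ne_top_right (lower.trans_lt hab).ne (ENNReal.ofReal_pos.2 hc).ne'

/-- given data `q_n`, `s_{n,i}`, `s_t` satisfying conditions (1)–(4),
the map `x ↦ a_x` is continuous and satisfies
`Σ|x(n)-y(n)|/(n+1) ≤ Σ|a_x(m)-a_y(m)|/(m+1) ≤ 2 Σ|x(n)-y(n)|/(n+1)`;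
in particular `x E_I y ↔ a_x E_I a_y`. -/
theorem buildA_reduction
    (q : ℕ → ℕ) (s2 : ℕ → Bool → List Bool) (st : List Bool → List Bool)
    -- (1)
    (h1a : q 0 = 0)
    (h1b : ∀ n : ℕ, ∀ t : List Bool, t.length = n → q (n + 1) = (st t).length)
    -- (2)
    (h2a : s2 0 false = [] ∧ s2 0 true = [])
    (h2b : ∀ n : ℕ, 0 < n →
      (s2 n false).length = (s2 n true).length ∧ 0 < (s2 n false).length)
    -- (3)
    (h3a : st [] = [])
    (h3b : ∀ (t : List Bool) (i : Bool), st (t ++ [i]) = st t ++ s2 (t.length + 1) i)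
    -- (4)
    (h4 : ∀ n : ℕ,
      (1 : ℝ) / (n + 1) ≤
        (∑ k ∈ Finset.range (s2 (n + 1) false).length,
          if (s2 (n + 1) false).getD k false = (s2 (n + 1) true).getD k false then (0 : ℝ)
          else 1 / ((q (n + 1) : ℝ) + (k : ℝ) + 1)) ∧
      (∑ k ∈ Finset.range (s2 (n + 1) false).length,
          if (s2 (n + 1) false).getD k false = (s2 (n + 1) true).getD k false then (0 : ℝ)
          else 1 / ((q (n + 1) : ℝ) + (k : ℝ) + 1)) ≤ 2 / (n + 1)) :
    Continuous (buildA st) ∧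
      ∀ x y : Cantor,
        eiSum x y ≤ eiSum (buildA st x) (buildA st y) ∧
        eiSum (buildA st x) (buildA st y) ≤ 2 * eiSum x y ∧
        (EI x y ↔ EI (buildA st x) (buildA st y)) := by
  simpa only [ENNReal.ofReal_one, ENNReal.ofReal_ofNat, one_mul] using
    buildA_reduction_general q s2 st one_pos (fun t => (h1b _ t rfl).symm) h3b h4
end

section
/- The map f ↦ μ_f, sending a code f ∈ p(2^ω) to the unique Borel probability measure μ_f on 2^ω with μ_f(N_s) = f(s) for all s ∈ 2^{<ω}, is a homeomorphism from p(2^ω) (with the topology inherited from the product topology on [0,1]^{2^{<ω}}) onto the space P(2^ω) of Borel probability measures on 2^ω equipped with the topology of weak convergence. -/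
open MeasureTheory

/-- The basic clopen cylinder `N_s = {x ∈ 2^ω : s ⊆ x}`. -/
def cyl (s : List Bool) : Set Cantor :=
  {x | ∀ i : ℕ, i < s.length → x i = s.getD i false}

/-- A code for a measure: `f : 2^{<ω} → [0,1]` with `f(∅) = 1` and
`f(s) = f(s⌢0) + f(s⌢1)`. -/
def IsMeasureCode (f : List Bool → Set.Icc (0 : ℝ) 1) : Prop :=
  (f [] : ℝ) = 1 ∧
    ∀ s : List Bool, (f s : ℝ) = (f (s ++ [false]) : ℝ) + (f (s ++ [true]) : ℝ)

/-- The space `p(2^ω)` of codes, topologized as a subspace of `[0,1]^{2^{<ω}}`. -/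
abbrev CodeSpace : Type := {f : List Bool → Set.Icc (0 : ℝ) 1 // IsMeasureCode f}

/-!
The map sending a measure `μ` to its code `s ↦ μ (N_s)` is continuous because cylinders are clopen,
and injective because cylinders form a π-system generating the Borel sets. Its range is closed, as
`P(2^ω)` is compact, and dense, as some combination of point masses agrees with a given code on all
strings of length at most `n`. So it is a continuous bijection from a compact space onto a Hausdorff
one, and `f ↦ μ_f` is its inverse.
-/

open Filter Topology
open scoped ENNReal

section Cylinder

variable (E : ℕ → Type*)

theorem isPiSystem_cylinder :
    IsPiSystem {s : Set (∀ n, E n) | ∃ (x : ∀ n, E n) (n : ℕ), s = PiNat.cylinder x n} := by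
  rintro _ ⟨x, m, rfl⟩ _ ⟨y, n, rfl⟩ ⟨z, hx, hy⟩
  rw [← PiNat.mem_cylinder_iff_eq.1 hx, ← PiNat.mem_cylinder_iff_eq.1 hy]
  rcases le_total m n with h | h
  · exact ⟨z, n, Set.inter_eq_right.2 (PiNat.cylinder_anti z h)⟩
  · exact ⟨z, m, Set.inter_eq_left.2 (PiNat.cylinder_anti z h)⟩

variable {E} [∀ n, TopologicalSpace (E n)] [∀ n, DiscreteTopology (E n)]

theorem isClopen_cylinder (x : ∀ n, E n) (n : ℕ) : IsClopen (PiNat.cylinder x n) := by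
  refine ⟨?_, PiNat.isOpen_cylinder E x n⟩
  rw [PiNat.cylinder_eq_pi]
  exact isClosed_set_pi fun _ _ => isClosed_discrete _

end Cylinder

theorem cyl_eq_cylinder (s : List Bool) :
    cyl s = PiNat.cylinder (fun i => s.getD i false) s.length :=
  rfl

theorem cylinder_eq_cyl (x : Cantor) (n : ℕ) :
    PiNat.cylinder x n = cyl ((List.range n).map x) := by
  ext y
  simp +contextual [cyl]

theorem range_cyl :
    Set.range cyl = {s : Set Cantor | ∃ (x : Cantor) (n : ℕ), s = PiNat.cylinder x n} := by
  ext A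
  constructor
  · rintro ⟨s, rfl⟩
    exact ⟨_, _, cyl_eq_cylinder s⟩
  · rintro ⟨x, n, rfl⟩
    exact ⟨_, (cylinder_eq_cyl x n).symm⟩

theorem isPiSystem_range_cyl : IsPiSystem (Set.range cyl) := by
  rw [range_cyl]
  exact isPiSystem_cylinder _

theorem generateFrom_range_cyl :
    MeasurableSpace.generateFrom (Set.range cyl) = MeasurableSpace.pi := by
  rw [range_cyl, ← (PiNat.isTopologicalBasis_cylinders _).borel_eq_generateFrom]
  exact BorelSpace.measurable_eq.symm

theorem isClopen_cyl (s : List Bool) : IsClopen (cyl s) :=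
  isClopen_cylinder _ _

theorem measurableSet_cyl (s : List Bool) : MeasurableSet (cyl s) :=
  (isClopen_cyl s).isOpen.measurableSet

theorem cyl_nil : cyl [] = Set.univ :=
  PiNat.cylinder_zero _

theorem mem_cyl_append_singleton {s : List Bool} {b : Bool} {x : Cantor} :
    x ∈ cyl (s ++ [b]) ↔ x ∈ cyl s ∧ x s.length = b := by
  simp only [cyl, Set.mem_ofPred_eq, List.length_append, List.length_singleton,
    Nat.forall_lt_succ_right]
  refine and_congr (forall₂_congr fun i hi => ?_) (by simp)
  rw [List.getD_append _ _ _ _ hi]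

theorem cyl_eq_union (s : List Bool) : cyl s = cyl (s ++ [false]) ∪ cyl (s ++ [true]) := by
  ext x
  cases h : x s.length <;> simp [mem_cyl_append_singleton, h]

theorem disjoint_cyl_append (s : List Bool) :
    Disjoint (cyl (s ++ [false])) (cyl (s ++ [true])) := by
  refine Set.disjoint_left.2 fun x hfalse htrue => ?_
  exact Bool.false_ne_true <| (mem_cyl_append_singleton.1 hfalse).2.symm.trans
    (mem_cyl_append_singleton.1 htrue).2

/-- The sequence `b⌢x`, obtained by prepending the bit `b` to `x`; it identifies `2^ω` with each of
its two halves `N_⟨b⟩`. -/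
def cantorCons (b : Bool) (x : Cantor) : Cantor
  | 0 => b
  | n + 1 => x n

theorem measurable_cantorCons (b : Bool) : Measurable (cantorCons b) :=
  measurable_pi_iff.2 fun
    | 0 => measurable_const
    | n + 1 => measurable_pi_apply n

theorem cantorCons_mem_cyl_cons {b c : Bool} {s : List Bool} {x : Cantor} :
    cantorCons b x ∈ cyl (c :: s) ↔ b = c ∧ x ∈ cyl s := by
  simp only [cyl, Set.mem_ofPred_eq, List.length_cons, Nat.forall_lt_succ_left]
  rfl

theorem map_cantorCons_cyl_cons (μ : Measure Cantor) (b c : Bool) (s : List Bool) :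
    μ.map (cantorCons b) (cyl (c :: s)) = if b = c then μ (cyl s) else 0 := by
  rw [Measure.map_apply (measurable_cantorCons b) (measurableSet_cyl _)]
  split_ifs with h <;> simp [Set.preimage, cantorCons_mem_cyl_cons, h]

theorem exists_measure_cyl_eq_of_length_le {g : List Bool → ℝ≥0∞}
    (hg : ∀ s, g s = g (s ++ [false]) + g (s ++ [true])) (n : ℕ) :
    ∃ μ : Measure Cantor, ∀ s : List Bool, s.length ≤ n → μ (cyl s) = g s := by
  induction n generalizing g with
  | zero =>
    refine ⟨g [] • Measure.dirac fun _ => false, fun s hs => ?_⟩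
    obtain rfl : s = [] := List.eq_nil_of_length_eq_zero (Nat.le_zero.1 hs)
    simp [cyl_nil]
  | succ n ih =>
    obtain ⟨μ₀, hμ₀⟩ := ih (g := fun s => g (false :: s)) fun s => hg (false :: s)
    obtain ⟨μ₁, hμ₁⟩ := ih (g := fun s => g (true :: s)) fun s => hg (true :: s)
    let μ := μ₀.map (cantorCons false) + μ₁.map (cantorCons true)
    have hcons (b : Bool) (s : List Bool) (hs : s.length ≤ n) : μ (cyl (b :: s)) = g (b :: s) := by
      cases b <;> simp [μ, map_cantorCons_cyl_cons, hμ₀ s hs, hμ₁ s hs]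
    have hnil : μ (cyl []) = g [] := by
      rw [cyl_eq_union, measure_union (disjoint_cyl_append []) (measurableSet_cyl _), hg]
      exact congrArg₂ (· + ·) (hcons false [] n.zero_le) (hcons true [] n.zero_le)
    refine ⟨μ, fun s hs => ?_⟩
    cases s with
    | nil => exact hnil
    | cons b s => exact hcons b s (Nat.le_of_succ_le_succ hs)

/-- The code `s ↦ μ (N_s)` of a probability measure `μ` on `2^ω`: the inverse of the map
`f ↦ μ_f`. -/
noncomputable def measureCode (μ : ProbabilityMeasure Cantor) : CodeSpace where
  val s := ⟨(μ : Measure Cantor).real (cyl s), measureReal_nonneg, measureReal_le_one⟩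
  property := by
    refine ⟨by simp [cyl_nil], fun s => ?_⟩
    rw [← measureReal_union (disjoint_cyl_append s) (measurableSet_cyl _), ← cyl_eq_union]

theorem measure_cyl_eq_ofReal_measureCode (μ : ProbabilityMeasure Cantor) (s : List Bool) :
    (μ : Measure Cantor) (cyl s) = ENNReal.ofReal ((measureCode μ).1 s) :=
  (ofReal_measureReal (measure_ne_top _ _)).symm

theorem measureCode_injective : Function.Injective measureCode := by
  intro μ ν h
  have hcyl : ∀ A ∈ Set.range cyl, (μ : Measure Cantor) A = (ν : Measure Cantor) A := by
    rintro _ ⟨s, rfl⟩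
    rw [measure_cyl_eq_ofReal_measureCode, h, measure_cyl_eq_ofReal_measureCode]
  have hμν : (μ : Measure Cantor) = ν :=
    ext_of_generate_finite _ generateFrom_range_cyl.symm isPiSystem_range_cyl hcyl (by simp)
  exact Subtype.ext hμν

theorem continuous_measureReal_of_isClopen {Ω : Type*} [MeasurableSpace Ω] [TopologicalSpace Ω]
    [OpensMeasurableSpace Ω] [HasOuterApproxClosed Ω] {U : Set Ω} (hU : IsClopen U) :
    Continuous fun μ : ProbabilityMeasure Ω => (μ : Measure Ω).real U :=
  NNReal.continuous_coe.comp <| continuous_iff_continuousAt.2 fun _ =>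
    ProbabilityMeasure.tendsto_measure_of_isClopen_of_tendsto tendsto_id hU

theorem continuous_measureCode : Continuous measureCode :=
  Continuous.subtype_mk (continuous_pi fun s =>
    (continuous_measureReal_of_isClopen (isClopen_cyl s)).subtype_mk _) _

theorem exists_measureCode_eq_of_length_le (f : CodeSpace) (n : ℕ) :
    ∃ μ : ProbabilityMeasure Cantor, ∀ s : List Bool, s.length ≤ n →
      (measureCode μ).1 s = f.1 s := by
  obtain ⟨μ, hμ⟩ := exists_measure_cyl_eq_of_length_le
    (g := fun s => ENNReal.ofReal (f.1 s)) (fun s => by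
      rw [f.2.2 s, ENNReal.ofReal_add (f.1 _).2.1 (f.1 _).2.1]) n
  have hprob : IsProbabilityMeasure μ := by
    refine ⟨?_⟩
    rw [← cyl_nil, hμ [] n.zero_le, f.2.1, ENNReal.ofReal_one]
  refine ⟨⟨μ, hprob⟩, fun s hs => Subtype.ext ?_⟩
  change (μ (cyl s)).toReal = f.1 s
  rw [hμ s hs, ENNReal.toReal_ofReal (f.1 s).2.1]

theorem denseRange_measureCode : DenseRange measureCode := by
  intro f
  choose μ hμ using exists_measureCode_eq_of_length_le f
  refine mem_closure_of_tendsto (f := fun n => measureCode (μ n)) (b := atTop) ?_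
    (Eventually.of_forall fun n => Set.mem_range_self _)
  refine tendsto_subtype_rng.2 <| tendsto_pi_nhds.2 fun s => tendsto_const_nhds.congr' ?_
  filter_upwards [eventually_ge_atTop s.length] with n hn
  exact (hμ n s hn).symm

theorem measureCode_surjective : Function.Surjective measureCode :=
  Set.range_eq_univ.1 <|
    (isCompact_range continuous_measureCode).isClosed.closure_eq.symm.trans
      denseRange_measureCode.closure_range

theorem isHomeomorph_measureCode : IsHomeomorph measureCode :=
  isHomeomorph_iff_continuous_bijective.2
    ⟨continuous_measureCode, measureCode_injective, measureCode_surjective⟩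

/-- the map `f ↦ μ_f` is a homeomorphism from `p(2^ω)` onto the space
`P(2^ω)` of Borel probability measures on `2^ω` with the topology of weak convergence;
formally, there is a homeomorphism `h` such that `h(f)` assigns measure `f(s)` to the
cylinder `N_s`, for every code `f` and every string `s`. -/
theorem codeSpace_homeomorph_probabilityMeasure :
    ∃ h : CodeSpace ≃ₜ ProbabilityMeasure Cantor,
      ∀ (f : CodeSpace) (s : List Bool),
        (h f : Measure Cantor) (cyl s) = ENNReal.ofReal (f.1 s) := by
  let e := isHomeomorph_measureCode.homeomorph measureCode
  refine ⟨e.symm, fun f s => ?_⟩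
  have hcode : measureCode (e.symm f) = f := e.apply_symm_apply f
  rw [measure_cyl_eq_ofReal_measureCode, hcode]
end
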